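/- arXiv:1812.08242 — 3 statements merged into one kernel-verified Lean document; each statement's English description precedes it below -/
import Mathlib

section
/- For any subset Λ' ⊆ {1,…,N}, the dissipative subspace L_−(Λ') is invariant under A, and L_−(Λ') equals the linear span of {A^k g_n : k = 0,1,2,…; n ∈ Λ'} and also equals the linear span of {(Aᵀ)^k g_n : k = 0,1,2,…; n ∈ Λ'}, where g_n = (0, e_n) ∈ ℝ^{2N} and Aᵀ is the transpose (adjoint with respect to the standard inner product) of A. -/
open Matrix

variable {N : ℕ}

/-- The Hamiltonian matrix `A = [[0, (1/M)I], [−V, 0]]` on `L = ℝ^N × ℝ^N`. -/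
noncomputable def hamMatrix (M : ℝ) (V : Matrix (Fin N) (Fin N) ℝ) :
    Matrix (Fin N ⊕ Fin N) (Fin N ⊕ Fin N) ℝ :=
  Matrix.fromBlocks 0 ((1 / M) • 1) (-V) 0

/-- The subspace `l_V(Λ')` of `ℝ^N` spanned by the vectors `V^k e_n`, `n ∈ Λ'`, `k ≥ 0`. -/
def lV (V : Matrix (Fin N) (Fin N) ℝ) (Λ' : Finset (Fin N)) : Submodule ℝ (Fin N → ℝ) :=
  Submodule.span ℝ {v | ∃ k : ℕ, ∃ i ∈ Λ', v = (V ^ k).mulVec (Pi.single i 1)}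

/-- The dissipative subspace `L_−(Λ') = {(q,p) : q,p ∈ l_V(Λ')}` of `ℝ^{2N}`. -/
def Lminus (V : Matrix (Fin N) (Fin N) ℝ) (Λ' : Finset (Fin N)) :
    Submodule ℝ ((Fin N ⊕ Fin N) → ℝ) :=
  (lV V Λ').comap (LinearMap.funLeft ℝ ℝ Sum.inl) ⊓
    (lV V Λ').comap (LinearMap.funLeft ℝ ℝ Sum.inr)

/-- The vector `g_n = (0, e_n) ∈ ℝ^{2N}`. -/
def gvec (n : Fin N) : (Fin N ⊕ Fin N) → ℝ := Pi.single (Sum.inr n) 1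

/-!
The Krylov subspace of a set `s` under a matrix `B`, spanned by the vectors `B^k x` with `x ∈ s`, is
the smallest `B`-invariant subspace containing `s`. For an antidiagonal block matrix
`B = [[0, P], [Q, 0]]`, the vectors `B^k (0, x)` are alternately `(0, (QP)^j x)` and
`(P (QP)^j x, 0)`, so the Krylov subspace of the vectors `(0, x)` is `P K × K` with `K` that of
`QP`. For both `A` and `Aᵀ`, the product `QP` is `-(1/M) V`, whence `K = l_V(Λ')`.
It remains to see that `P K = K`. As `P` is surjective and preserves `K`, it induces a surjective
endomorphism of the quotient by `K`; this is then injective, so `P x ∈ K` forces `x ∈ K`.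
-/

open Module.End (invtSubmodule)

section Krylov

variable {R n : Type*} [CommSemiring R] [Fintype n] [DecidableEq n]
  {A : Matrix n n R} {s : Set (n → R)} {p : Submodule R (n → R)}

/-- The Krylov subspace of a set `s` of vectors under a square matrix `A`: the span of the orbits
`A^k x` with `x ∈ s`. -/
def krylov (A : Matrix n n R) (s : Set (n → R)) : Submodule R (n → R) :=
  Submodule.span R {v | ∃ k : ℕ, ∃ x ∈ s, v = (A ^ k) *ᵥ x}

theorem krylov_image {ι : Type*} (A : Matrix n n R) (x : ι → n → R) (t : Set ι) :
    krylov A (x '' t) = Submodule.span R {v | ∃ k : ℕ, ∃ i ∈ t, v = (A ^ k) *ᵥ x i} := by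
  simp only [krylov, Set.exists_mem_image]

theorem subset_krylov (A : Matrix n n R) (s : Set (n → R)) : s ⊆ krylov A s :=
  fun x hx ↦ Submodule.subset_span ⟨0, x, hx, by rw [pow_zero, one_mulVec]⟩

theorem krylov_mem_invtSubmodule (A : Matrix n n R) (s : Set (n → R)) :
    krylov A s ∈ invtSubmodule A.mulVecLin := by
  refine Submodule.span_le.mpr ?_
  rintro _ ⟨k, x, hx, rfl⟩
  refine Submodule.subset_span ⟨k + 1, x, hx, ?_⟩
  rw [mulVecLin_apply, mulVec_mulVec, pow_succ']

theorem krylov_le (hs : s ⊆ p) (hp : p ∈ invtSubmodule A.mulVecLin) : krylov A s ≤ p := by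
  refine Submodule.span_le.mpr ?_
  rintro _ ⟨k, x, hx, rfl⟩
  induction k with
  | zero => simpa only [pow_zero, one_mulVec] using hs hx
  | succ k ih =>
    rw [pow_succ', ← mulVec_mulVec]
    exact hp ih

theorem krylov_smul {c : R} (hc : IsUnit c) (A : Matrix n n R) (s : Set (n → R)) :
    krylov (c • A) s = krylov A s := by
  have invt_smul : invtSubmodule (c • A).mulVecLin = invtSubmodule A.mulVecLin := by
    obtain ⟨u, rfl⟩ := hc
    rw [show ((u : R) • A).mulVecLin = u • A.mulVecLin from map_smul (mulVecBilin R R) _ A,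
      Module.End.invtSubmodule_smul]
  apply le_antisymm
  · exact krylov_le (subset_krylov A s) (invt_smul ▸ krylov_mem_invtSubmodule A s)
  · exact krylov_le (subset_krylov _ s) (invt_smul ▸ krylov_mem_invtSubmodule (c • A) s)

end Krylov

section BlockProd

variable {R m n : Type*} [CommSemiring R]

/-- The subspace `p × q` of `R^m × R^n`, where the latter is encoded as `m ⊕ n → R`. -/
def blockProd (p : Submodule R (m → R)) (q : Submodule R (n → R)) : Submodule R (m ⊕ n → R) :=
  p.comap (LinearMap.funLeft R R Sum.inl) ⊓ q.comap (LinearMap.funLeft R R Sum.inr)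

theorem sumElim_mem_blockProd {p : Submodule R (m → R)} {q : Submodule R (n → R)}
    {x : m → R} {y : n → R} : Sum.elim x y ∈ blockProd p q ↔ x ∈ p ∧ y ∈ q :=
  Iff.rfl

theorem blockProd_le {p : Submodule R (m → R)} {q : Submodule R (n → R)}
    {S : Submodule R (m ⊕ n → R)} (hp : ∀ x ∈ p, Sum.elim x (0 : n → R) ∈ S)
    (hq : ∀ y ∈ q, Sum.elim (0 : m → R) y ∈ S) : blockProd p q ≤ S := by
  rintro z ⟨hx, hy⟩
  have h := S.add_mem (hp _ hx) (hq _ hy)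
  rw [← Sum.elim_add_add, add_zero, zero_add] at h
  rwa [← Sum.elim_comp_inl_inr z]

variable [Fintype m] [Fintype n]

theorem fromBlocks_antidiagonal_mulVec (P : Matrix m n R) (Q : Matrix n m R) (x : m → R)
    (y : n → R) : fromBlocks 0 P Q 0 *ᵥ Sum.elim x y = Sum.elim (P *ᵥ y) (Q *ᵥ x) := by
  simp only [fromBlocks_mulVec, Sum.elim_comp_inl, Sum.elim_comp_inr, zero_mulVec, zero_add,
    add_zero]

theorem blockProd_mem_invtSubmodule {P : Matrix m n R} {Q : Matrix n m R}
    {p : Submodule R (m → R)} {q : Submodule R (n → R)}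
    (hP : q ≤ p.comap P.mulVecLin) (hQ : p ≤ q.comap Q.mulVecLin) :
    blockProd p q ∈ invtSubmodule (fromBlocks 0 P Q 0).mulVecLin := by
  rintro z ⟨hx, hy⟩
  rw [← Sum.elim_comp_inl_inr z, Submodule.mem_comap, mulVecLin_apply,
    fromBlocks_antidiagonal_mulVec]
  exact sumElim_mem_blockProd.mpr ⟨hP hy, hQ hx⟩

variable [DecidableEq m] [DecidableEq n]

theorem krylov_fromBlocks_antidiagonal (P : Matrix m n R) (Q : Matrix n m R) (s : Set (n → R)) :
    krylov (fromBlocks 0 P Q 0) (Sum.elim (0 : m → R) '' s) =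
      blockProd ((krylov (Q * P) s).map P.mulVecLin) (krylov (Q * P) s) := by
  set B := fromBlocks 0 P Q 0
  set S := krylov B (Sum.elim (0 : m → R) '' s)
  set K := krylov (Q * P) s
  have B_mulVec_mem {z} (hz : z ∈ S) : B *ᵥ z ∈ S := krylov_mem_invtSubmodule B _ hz
  apply le_antisymm
  · apply krylov_le
    · rintro _ ⟨x, hx, rfl⟩
      exact sumElim_mem_blockProd.mpr ⟨Submodule.zero_mem _, subset_krylov _ s hx⟩
    · refine blockProd_mem_invtSubmodule (Submodule.le_comap_map _ K) ?_
      rintro _ ⟨w, hw, rfl⟩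
      have hQP := krylov_mem_invtSubmodule (Q * P) s hw
      rwa [mulVecLin_mul] at hQP
  · have inr_mem : ∀ y ∈ K, Sum.elim (0 : m → R) y ∈ S := by
      let inr : (n → R) →ₗ[R] (m ⊕ n → R) :=
        (LinearEquiv.sumArrowLequivProdArrow m n R R).symm ∘ₗ LinearMap.inr R (m → R) (n → R)
      have K_le : K ≤ S.comap inr := by
        apply krylov_le
        · exact fun x hx ↦ subset_krylov B _ ⟨x, hx, rfl⟩
        · intro y hy
          have hB := B_mulVec_mem (B_mulVec_mem hy)
          change B *ᵥ B *ᵥ Sum.elim (0 : m → R) y ∈ S at hB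
          rwa [fromBlocks_antidiagonal_mulVec, fromBlocks_antidiagonal_mulVec, mulVec_zero,
            mulVec_zero, mulVec_mulVec] at hB
      exact fun y hy ↦ K_le hy
    refine blockProd_le ?_ inr_mem
    rintro _ ⟨w, hw, rfl⟩
    have hB := B_mulVec_mem (inr_mem w hw)
    rwa [fromBlocks_antidiagonal_mulVec, mulVec_zero] at hB

end BlockProd

theorem map_eq_of_surjective_of_le_comap {R E : Type*} [Ring R] [OrzechProperty R]
    [AddCommGroup E] [Module R E] [Module.Finite R E] {f : Module.End R E}
    (hf : Function.Surjective f) {p : Submodule R E} (hp : p ≤ p.comap f) :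
    p.map f = p := by
  have mapQ_surjective : Function.Surjective (p.mapQ p f hp) := fun y ↦ by
    obtain ⟨z, rfl⟩ := p.mkQ_surjective y
    obtain ⟨x, rfl⟩ := hf z
    exact ⟨p.mkQ x, rfl⟩
  have ker_mapQ_eq_bot : LinearMap.ker (p.mapQ p f hp) = ⊥ :=
    LinearMap.ker_eq_bot.mpr
      (OrzechProperty.injective_of_surjective_endomorphism _ mapQ_surjective)
  have comap_le : p.comap f ≤ p := by
    rw [Submodule.ker_mapQ, ← LinearMap.le_ker_iff_map, Submodule.ker_mkQ] at ker_mapQ_eq_bot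
    exact ker_mapQ_eq_bot
  nth_rw 1 [hp.antisymm comap_le]
  exact Submodule.map_comap_eq_of_surjective hf p

section Hamiltonian

variable {R n : Type*} [CommRing R] [Fintype n] [DecidableEq n]

theorem krylov_fromBlocks_eq_blockProd {P Q V : Matrix n n R} {c : R} {s : Set (n → R)}
    (hc : IsUnit c) (hQP : Q * P = c • V) (hP : IsUnit P)
    (hPs : krylov V s ∈ invtSubmodule P.mulVecLin) :
    krylov (fromBlocks 0 P Q 0) (Sum.elim (0 : n → R) '' s) =
      blockProd (krylov V s) (krylov V s) := by
  rw [krylov_fromBlocks_antidiagonal, hQP, krylov_smul hc,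
    map_eq_of_surjective_of_le_comap (mulVec_surjective_iff_isUnit.mpr hP) hPs]

theorem krylov_hamiltonian {c : R} (hc : IsUnit c) (V : Matrix n n R) (s : Set (n → R)) :
    krylov (fromBlocks 0 (c • 1) (-V) 0) (Sum.elim (0 : n → R) '' s) =
      blockProd (krylov V s) (krylov V s) := by
  have invt : krylov V s ∈ invtSubmodule (c • 1 : Matrix n n R).mulVecLin := fun x hx ↦ by
    simpa using Submodule.smul_mem _ c hx
  exact krylov_fromBlocks_eq_blockProd hc.neg (by simp) (isUnit_one.smul hc.unit) invt

theorem krylov_hamiltonian_transpose {c : R} (hc : IsUnit c) {V : Matrix n n R} (hV : IsUnit V)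
    (hV_symm : V.IsSymm) (s : Set (n → R)) :
    krylov (fromBlocks 0 (c • 1) (-V) 0)ᵀ (Sum.elim (0 : n → R) '' s) =
      blockProd (krylov V s) (krylov V s) := by
  have transpose_eq : (fromBlocks 0 (c • 1) (-V) 0)ᵀ =
      fromBlocks 0 (-V) (c • (1 : Matrix n n R)) 0 := by
    simp [fromBlocks_transpose, hV_symm.eq]
  have invt : krylov V s ∈ invtSubmodule (-V).mulVecLin := fun x hx ↦ by
    simpa using krylov_mem_invtSubmodule V s hx
  rw [transpose_eq]
  exact krylov_fromBlocks_eq_blockProd hc.neg (by simp) hV.neg invt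

/-- The scalar `c` stands for `1/M`, and `s` for the set of the `e_n` with `n ∈ Λ'`. -/
theorem Lminus_invariant_and_span_general {c : R} (hc : IsUnit c) {V : Matrix n n R}
    (hV : IsUnit V) (hV_symm : V.IsSymm) (s : Set (n → R)) :
    let A := fromBlocks 0 (c • 1) (-V) 0
    let L := blockProd (krylov V s) (krylov V s)
    (∀ ψ ∈ L, A *ᵥ ψ ∈ L) ∧
      L = krylov A (Sum.elim (0 : n → R) '' s) ∧ L = krylov Aᵀ (Sum.elim (0 : n → R) '' s) := by
  refine ⟨?_, (krylov_hamiltonian hc V s).symm, (krylov_hamiltonian_transpose hc hV hV_symm s).symm⟩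
  rw [← krylov_hamiltonian hc V s]
  exact krylov_mem_invtSubmodule _ _

end Hamiltonian

theorem lV_eq_krylov (V : Matrix (Fin N) (Fin N) ℝ) (Λ' : Finset (Fin N)) :
    lV V Λ' = krylov V ((fun i ↦ Pi.single i 1) '' Λ') :=
  (krylov_image V _ _).symm

theorem Lminus_eq_blockProd (V : Matrix (Fin N) (Fin N) ℝ) (Λ' : Finset (Fin N)) :
    Lminus V Λ' = blockProd (lV V Λ') (lV V Λ') := rfl

theorem gvec_eq_sumElim (i : Fin N) : gvec i = Sum.elim (0 : Fin N → ℝ) (Pi.single i 1) := by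
  ext (j | j) <;> simp [gvec, Pi.single_apply]

theorem span_gvec_eq_krylov (A : Matrix (Fin N ⊕ Fin N) (Fin N ⊕ Fin N) ℝ)
    (Λ' : Finset (Fin N)) :
    Submodule.span ℝ {v | ∃ k : ℕ, ∃ i ∈ Λ', v = (A ^ k) *ᵥ gvec i} =
      krylov A (Sum.elim (0 : Fin N → ℝ) '' ((fun i ↦ Pi.single i 1) '' Λ')) := by
  simp only [Set.image_image, krylov_image, gvec_eq_sumElim, Finset.mem_coe]

/-- The dissipative subspace `L_−(Λ')` is invariant under `A`, and equals both the span of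
`{A^k g_n : k ≥ 0, n ∈ Λ'}` and the span of `{(Aᵀ)^k g_n : k ≥ 0, n ∈ Λ'}`. -/
theorem Lminus_invariant_and_span (M : ℝ) (hM : 0 < M)
    (V : Matrix (Fin N) (Fin N) ℝ) (hV : V.PosDef) (Λ' : Finset (Fin N)) :
    (∀ ψ ∈ Lminus V Λ', (hamMatrix M V).mulVec ψ ∈ Lminus V Λ') ∧
    Lminus V Λ' = Submodule.span ℝ
      {v | ∃ k : ℕ, ∃ i ∈ Λ', v = ((hamMatrix M V) ^ k).mulVec (gvec i)} ∧
    Lminus V Λ' = Submodule.span ℝ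
      {v | ∃ k : ℕ, ∃ i ∈ Λ', v = ((hamMatrix M V)ᵀ ^ k).mulVec (gvec i)} := by
  have hV_symm : V.IsSymm := (conjTranspose_eq_transpose_of_trivial V).symm.trans hV.isHermitian
  simpa only [Lminus_eq_blockProd, lV_eq_krylov, span_gvec_eq_krylov, hamMatrix] using
    Lminus_invariant_and_span_general (one_div_pos.mpr hM).ne'.isUnit hV.isUnit hV_symm
      ((fun i ↦ Pi.single i 1) '' Λ')
end

section
/- Let G : ℝ^k → ℝ^n be a real-analytic map whose image is all of ℝ^n (G is surjective). Then for every Borel measurable set B ⊆ ℝ^n, the Lebesgue measure of B is zero if and only if the Lebesgue measure of the preimage G^{-1}(B) in ℝ^k is zero. -/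
open MeasureTheory

open Topology Filter Set Module
open scoped ContDiff

/-! Around a regular point, `G` is a projection in suitable `C¹` coordinates, so by Fubini's theorem
a set is null exactly when its preimage near that point is. It remains to show that the critical
points, and the critical values, are null.

The critical values are null by an analytic Sard theorem, proved by induction on the dimension of
the domain. On a ball, choose a point where the rank of the derivative is maximal and an
invertible minor of that size there. Near a critical point of maximal rank, the rank is constant
and `G` factors through a space of smaller dimension than the target, which gives a null image.
Wherever the rank drops, the minor vanishes. The zero set of a nonzero analytic function is
covered by countably many analytic images of hyperplanes, because at each zero some iterated
derivative vanishes while the next one does not; the induction hypothesis applies to `G` composed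
with each of these maps.

A surjective `G` therefore has a regular point, so a maximal minor of its derivative is not
identically zero, and the critical points, being among the zeros of this minor, are null. -/

section SubmersionChart

variable {𝕜 E F : Type*} [RCLike 𝕜]
  [NormedAddCommGroup E] [NormedSpace 𝕜 E] [CompleteSpace E]
  [NormedAddCommGroup F] [NormedSpace 𝕜 F] [FiniteDimensional 𝕜 F]

theorem exists_submersion_chart {n : ℕ∞ω} (hn₀ : n ≠ 0) (hn : n ≠ ∞) {f : E → F} {x : E}
    (hf : ContDiffAt 𝕜 n f x) (hsurj : Function.Surjective (fderiv 𝕜 f x)) :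
    ∃ P : OpenPartialHomeomorph E (F × (fderiv 𝕜 f x).ker), x ∈ P.source ∧
      (∀ y, (P y).1 = f y) ∧ ContDiffOn 𝕜 n P P.source ∧ ContDiffOn 𝕜 n P.symm P.target := by
  have := FiniteDimensional.complete 𝕜 F
  have hstrict : HasStrictFDerivAt f (fderiv 𝕜 f x) x := hf.hasStrictFDerivAt hn₀
  have hker := (fderiv 𝕜 f x).ker_closedComplemented_of_finiteDimensional_range
  let φ := hstrict.implicitFunctionDataOfComplemented f _ (LinearMap.range_eq_top.2 hsurj) hker
  let P := φ.toOpenPartialHomeomorph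
  have hxP : x ∈ P.source := φ.pt_mem_toOpenPartialHomeomorph_source
  have hP : ContDiffAt 𝕜 n P x := hf.prodMk <|
    (ContinuousLinearMap.contDiff (Classical.choose hker)).contDiffAt.comp x
      (contDiffAt_id.sub contDiffAt_const)
  have hPsymm : ContDiffAt 𝕜 n P.symm (P x) := by
    have hderiv := φ.hasStrictFDerivAt.hasFDerivAt
    exact P.contDiffAt_symm (P.map_source hxP) (by rwa [P.left_inv hxP]) (by rwa [P.left_inv hxP])
  obtain ⟨V, hV, hVopen, hxV⟩ := eventually_nhds_iff.1 <|
    (hP.eventually hn).and ((P.continuousAt hxP).eventually (hPsymm.eventually hn))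
  refine ⟨P.restrOpen V hVopen, ⟨hxP, hxV⟩, fun _ => rfl, ?_, ?_⟩
  · exact fun y hy => (hV y hy.2).1.contDiffWithinAt
  · rintro z ⟨hz, hzV⟩
    simpa only [P.right_inv hz] using! (hV _ hzV).2.contDiffWithinAt

end SubmersionChart

section Thin

variable {E : Type*} [NormedAddCommGroup E] [NormedSpace ℝ E]

/-- A set is analytically thin if it is covered by the images of countably many analytic maps
defined on proper subspaces. Zero sets of analytic functions are of this kind, and the maps allow
induction on the dimension. Each map is total but only used at the points where it is analytic, so
that no domains have to be carried around. -/
def IsAnalyticallyThin (s : Set E) : Prop :=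
  ∃ 𝒞 : Set (Σ K : Submodule ℝ E, K → E), 𝒞.Countable ∧ (∀ P ∈ 𝒞, P.1 < ⊤) ∧
    s ⊆ ⋃ P ∈ 𝒞, P.2 '' {v | AnalyticAt ℝ P.2 v}

namespace IsAnalyticallyThin

theorem mono {s t : Set E} (hst : s ⊆ t) (ht : IsAnalyticallyThin t) : IsAnalyticallyThin s :=
  let ⟨𝒞, hcount, hlt, hcover⟩ := ht
  ⟨𝒞, hcount, hlt, hst.trans hcover⟩

theorem image {K : Submodule ℝ E} (hK : K < ⊤) (ψ : K → E) :
    IsAnalyticallyThin (ψ '' {v | AnalyticAt ℝ ψ v}) :=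
  ⟨{⟨K, ψ⟩}, countable_singleton _, by simpa using hK, by simp⟩

theorem sUnion {S : Set (Set E)} (hS : S.Countable) (h : ∀ s ∈ S, IsAnalyticallyThin s) :
    IsAnalyticallyThin (⋃₀ S) := by
  choose! 𝒞 hcount hlt hcover using h
  refine ⟨⋃ s ∈ S, 𝒞 s, hS.biUnion hcount, ?_, sUnion_subset fun s hs => ?_⟩
  · simp only [mem_iUnion]
    rintro P ⟨s, hs, hP⟩
    exact hlt s hs P hP
  · exact (hcover s hs).trans (biUnion_subset_biUnion_left (subset_biUnion_of_mem hs))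

theorem iUnion {s : ℕ → Set E} (h : ∀ i, IsAnalyticallyThin (s i)) :
    IsAnalyticallyThin (⋃ i, s i) :=
  sUnion (countable_range s) (forall_mem_range.2 h)

theorem of_locally [FiniteDimensional ℝ E] {s : Set E}
    (h : ∀ x ∈ s, ∃ t ∈ 𝓝[s] x, IsAnalyticallyThin t) : IsAnalyticallyThin s :=
  have := FiniteDimensional.proper_real E
  (HereditarilyLindelofSpace.isLindelof s).induction_on (fun _ _ => mono)
    (fun _ => sUnion) h

theorem measure_image_eq_zero {F : Type*} [MeasurableSpace F] {ν : Measure F} {s : Set E}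
    (hs : IsAnalyticallyThin s) (f : E → F)
    (h : ∀ K < (⊤ : Submodule ℝ E), ∀ ψ : K → E,
      ν (f '' (s ∩ ψ '' {v | AnalyticAt ℝ ψ v})) = 0) : ν (f '' s) = 0 := by
  obtain ⟨𝒞, hcount, hlt, hcover⟩ := hs
  have himage : f '' s ⊆ ⋃ P ∈ 𝒞, f '' (s ∩ P.2 '' {v | AnalyticAt ℝ P.2 v}) := by
    rw [← image_iUnion₂, ← inter_iUnion₂]
    exact image_mono (subset_inter Subset.rfl hcover)
  exact measure_mono_null himage
    ((measure_biUnion_null_iff hcount).2 fun P hP => h P.1 (hlt P hP) P.2)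

end IsAnalyticallyThin

end Thin

section ZeroSets

variable {E H : Type*} [NormedAddCommGroup E] [NormedSpace ℝ E]
  [NormedAddCommGroup H] [NormedSpace ℝ H]

theorem exists_nhds_isAnalyticallyThin_inter_zeros [FiniteDimensional ℝ E] {w : E → ℝ} {z : E}
    (hw : AnalyticAt ℝ w z) (hdw : fderiv ℝ w z ≠ 0) :
    ∃ V ∈ 𝓝 z, IsAnalyticallyThin (V ∩ w ⁻¹' {0}) := by
  have hdw' : (fderiv ℝ w z).toLinearMap ≠ 0 := mod_cast hdw
  have hsurj : Function.Surjective (fderiv ℝ w z) := LinearMap.surjective hdw'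
  have hker : (fderiv ℝ w z).ker < ⊤ := lt_top_iff_ne_top.2 fun h => hdw' (LinearMap.ker_eq_top.1 h)
  obtain ⟨P, hzP, hPw, -, hPsymm⟩ :=
    exists_submersion_chart (n := ω) (by simp) (by simp) hw.contDiffAt hsurj
  refine ⟨P.source, P.open_source.mem_nhds hzP,
    (IsAnalyticallyThin.image hker fun v => P.symm (0, v)).mono ?_⟩
  rintro y ⟨hyP, hy : w y = 0⟩
  have hPy : P y = (0, (P y).2) := Prod.ext ((hPw y).trans hy) rfl
  refine ⟨(P y).2, ?_, by simpa only [← hPy] using P.left_inv hyP⟩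
  have han : AnalyticAt ℝ P.symm (0, (P y).2) := by
    rw [← hPy]
    exact (hPsymm.contDiffAt (P.open_target.mem_nhds (P.map_source hyP))).analyticAt
  exact han.fun_comp (analyticAt_const.prod analyticAt_id)

theorem isAnalyticallyThin_setOf_eq_zero_fderiv_ne_zero [FiniteDimensional ℝ E] {g : E → H}
    {U : Set E} (hg : AnalyticOnNhd ℝ g U) :
    IsAnalyticallyThin {z ∈ U | g z = 0 ∧ fderiv ℝ g z ≠ 0} := by
  refine .of_locally fun z ⟨hzU, _, hdg⟩ => ?_
  obtain ⟨v, hv⟩ := DFunLike.ne_iff.1 hdg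
  obtain ⟨l, hl⟩ := SeparatingDual.exists_ne_zero (R := ℝ) hv
  have hlg : AnalyticAt ℝ (l ∘ g) z := (l.analyticAt _).comp (hg z hzU)
  have hdlg : fderiv ℝ (l ∘ g) z ≠ 0 := by
    rw [fderiv_comp z l.differentiableAt (hg z hzU).differentiableAt, l.fderiv]
    exact fun h => hl (DFunLike.congr_fun h v)
  obtain ⟨V, hV, hthin⟩ := exists_nhds_isAnalyticallyThin_inter_zeros hlg hdlg
  refine ⟨_, inter_mem_nhdsWithin _ hV, hthin.mono ?_⟩
  rintro y ⟨⟨-, hy, -⟩, hyV⟩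
  exact ⟨hyV, by simp [hy]⟩

theorem exists_iteratedFDeriv_ne_zero {𝕜 X Y : Type*} [NontriviallyNormedField 𝕜] [CharZero 𝕜]
    [NormedAddCommGroup X] [NormedSpace 𝕜 X] [NormedAddCommGroup Y] [NormedSpace 𝕜 Y]
    [CompleteSpace Y] {h : X → Y} {z : X} (hh : AnalyticAt 𝕜 h z) (hne : ¬ h =ᶠ[𝓝 z] 0) :
    ∃ i, iteratedFDeriv 𝕜 i h z ≠ 0 := by
  contrapose! hne
  obtain ⟨q, r, hq⟩ := hh
  filter_upwards [Metric.eball_mem_nhds z hq.r_pos] with y hy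
  have hsum := hq.hasSum_iteratedFDeriv (y := y - z)
    (by simpa [Metric.mem_eball, edist_eq_enorm_sub] using hy)
  simpa [hne] using hsum.unique (by simp [hne])

theorem isAnalyticallyThin_setOf_eq_zero [FiniteDimensional ℝ E] [CompleteSpace H] {h : E → H}
    {U : Set E} (hU : IsPreconnected U) (hh : AnalyticOnNhd ℝ h U)
    {x : E} (hxU : x ∈ U) (hhx : h x ≠ 0) : IsAnalyticallyThin {z ∈ U | h z = 0} := by
  refine (IsAnalyticallyThin.iUnion fun i =>
    isAnalyticallyThin_setOf_eq_zero_fderiv_ne_zero (hh.iteratedFDeriv i)).mono ?_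
  rintro z ⟨hzU, hz⟩
  have hne : ¬ h =ᶠ[𝓝 z] 0 := fun h0 =>
    hhx (hh.eqOn_zero_of_preconnected_of_eventuallyEq_zero hU hzU h0 hxU)
  obtain ⟨i, hi, hi'⟩ : ∃ i, iteratedFDeriv ℝ i h z = 0 ∧ iteratedFDeriv ℝ (i + 1) h z ≠ 0 := by
    by_contra! hstep
    obtain ⟨i, hi⟩ := exists_iteratedFDeriv_ne_zero (hh z hzU) hne
    exact hi (Nat.rec (by ext; simpa using hz) hstep i)
  refine mem_iUnion.2 ⟨i, hzU, hi, fun hd => hi' ?_⟩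
  ext v
  simp [iteratedFDeriv_succ_apply_left, hd]

end ZeroSets

section NullImages

theorem measure_image_null_of_locally_null {α β : Type*} [TopologicalSpace α]
    [SecondCountableTopology α] [MeasurableSpace β] (ν : Measure β) {f : α → β} {s : Set α}
    (h : ∀ x ∈ s, ∃ t ∈ 𝓝[s] x, ν (f '' t) = 0) : ν (f '' s) = 0 :=
  measure_null_of_locally_null (μ := OuterMeasure.comap f ν.toOuterMeasure) s h

variable {E F : Type*} [NormedAddCommGroup E] [NormedSpace ℝ E] [FiniteDimensional ℝ E]
  [NormedAddCommGroup F] [NormedSpace ℝ F] [FiniteDimensional ℝ F]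
  [MeasurableSpace F] [BorelSpace F] (ν : Measure F) [ν.IsAddHaarMeasure]

theorem addHaar_image_null_of_finrank_eq [MeasurableSpace E] [BorelSpace E]
    (μ : Measure E) [μ.IsAddHaarMeasure] (hEF : finrank ℝ E = finrank ℝ F) {f : E → F} {s : Set E}
    (hf : DifferentiableOn ℝ f s) (hs : μ s = 0) : ν (f '' s) = 0 := by
  let e : F ≃L[ℝ] E := .ofFinrankEq hEF.symm
  have hcomp : μ ((e ∘ f) '' s) = 0 :=
    addHaar_image_eq_zero_of_differentiableOn_of_addHaar_eq_zero μ
      (e.differentiable.comp_differentiableOn hf) hs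
  have hac : ν.map e ≪ μ := Measure.absolutelyContinuous_isAddHaarMeasure _ _
  have hmap : ν.map e ((e ∘ f) '' s) = 0 := hac hcomp
  have he : MeasurableEmbedding e := e.toHomeomorph.measurableEmbedding
  rwa [he.map_apply, image_comp, e.injective.preimage_image] at hmap

theorem addHaar_image_null_of_finrank_lt (hEF : finrank ℝ E < finrank ℝ F) {f : E → F} {s : Set E}
    (hf : DifferentiableOn ℝ f s) : ν (f '' s) = 0 := by
  borelize E
  obtain ⟨m, hm⟩ := Nat.exists_eq_add_of_lt hEF
  have hnull : (Measure.addHaar.prod volume : Measure (E × (Fin (m + 1) → ℝ))) (s ×ˢ {0}) = 0 := by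
    rw [Measure.prod_prod, measure_singleton, mul_zero]
  have himage : f '' s = (f ∘ Prod.fst) '' (s ×ˢ ({0} : Set (Fin (m + 1) → ℝ))) := by
    rw [image_comp, fst_image_prod _ (singleton_nonempty _)]
  rw [himage]
  refine addHaar_image_null_of_finrank_eq ν _ ?_
    (hf.comp differentiable_fst.differentiableOn fun z hz => hz.1) hnull
  rw [finrank_prod, finrank_fin_fun, hm, add_assoc]

theorem IsAnalyticallyThin.addHaar_eq_zero {s : Set F} (hs : IsAnalyticallyThin s) : ν s = 0 := by
  rw [← image_id s]
  refine hs.measure_image_eq_zero id fun K hK ψ => ?_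
  rw [image_id]
  exact measure_mono_null inter_subset_right <| addHaar_image_null_of_finrank_lt ν
    (Submodule.finrank_lt hK.ne) fun v hv => hv.differentiableAt.differentiableWithinAt

end NullImages

section LinearRank

variable {k R K F : Type*} [Field k] [AddCommGroup R] [Module k R] [AddCommGroup K] [Module k K]
  [AddCommGroup F] [Module k F] [FiniteDimensional k F]

theorem exists_forall_finrank_range_le {α : Type*} (A : α → K →ₗ[k] F) {U : Set α}
    (hU : U.Nonempty) : ∃ x ∈ U, ∀ y ∈ U, finrank k (A y).range ≤ finrank k (A x).range := by
  let ranks := (fun y => finrank k (A y).range) '' U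
  have hbdd : BddAbove ranks :=
    ⟨finrank k F, forall_mem_image.2 fun y _ => Submodule.finrank_le (A y).range⟩
  obtain ⟨x, hxU, hx⟩ := Nat.sSup_mem (hU.image _) hbdd
  exact ⟨x, hxU, fun y hy => (le_csSup hbdd (mem_image_of_mem _ hy)).trans_eq hx.symm⟩

theorem comp_inr_eq_zero_of_comp_eq_fst {M : R × K →ₗ[k] F} {q : F →ₗ[k] R}
    (hq : q ∘ₗ M = .fst k R K) (hM : finrank k M.range ≤ finrank k R) :
    M ∘ₗ .inr k R K = 0 := by
  let qM : M.range →ₗ[k] R := q.domRestrict M.range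
  have hsurj : Function.Surjective qM := fun u =>
    ⟨⟨M (u, 0), (u, 0), rfl⟩, DFunLike.congr_fun hq (u, 0)⟩
  have : FiniteDimensional k R := .of_surjective qM hsurj
  have hinj : Function.Injective qM :=
    (OrzechProperty.bijective_of_surjective_of_finrank_le qM hsurj hM).1
  ext v
  have hqMv : qM ⟨M (0, v), (0, v), rfl⟩ = qM 0 := by
    simpa [qM] using DFunLike.congr_fun hq (0, v)
  exact congrArg Subtype.val (hinj hqMv)

end LinearRank

section ConstantRank

variable {E F R K : Type*}
  [NormedAddCommGroup E] [NormedSpace ℝ E] [NormedAddCommGroup F] [NormedSpace ℝ F]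
  [NormedAddCommGroup R] [NormedSpace ℝ R] [NormedAddCommGroup K] [NormedSpace ℝ K]

theorem analyticAt_matrix_det {𝕜 X ι : Type*} [NontriviallyNormedField 𝕜] [NormedAddCommGroup X]
    [NormedSpace 𝕜 X] [Fintype ι] [DecidableEq ι] {M : X → Matrix ι ι 𝕜} {x : X}
    (hM : ∀ i j, AnalyticAt 𝕜 (fun y => M y i j) x) : AnalyticAt 𝕜 (fun y => (M y).det) x := by
  simp_rw [Matrix.det_apply']
  exact Finset.analyticAt_fun_sum _ fun σ _ => analyticAt_const.mul
    (Finset.analyticAt_fun_prod _ fun i _ => hM _ _)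

theorem isAnalyticallyThin_setOf_finrank_range_lt [FiniteDimensional ℝ E] [FiniteDimensional ℝ F]
    {A : E → K →L[ℝ] F} {U : Set E} (hU : IsPreconnected U) (hA : AnalyticOnNhd ℝ A U)
    {x : E} (hxU : x ∈ U) :
    IsAnalyticallyThin {y ∈ U | finrank ℝ (A y).range < finrank ℝ (A x).range} := by
  obtain ⟨q, hq⟩ : (A x).range.ClosedComplemented := .of_finiteDimensional _
  let b := finBasis ℝ (A x).range
  choose v hv using fun i => (b i).2
  let minor : E → ℝ := fun y => (b.toMatrix fun i => q (A y (v i))).det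
  have hminor : AnalyticOnNhd ℝ minor U := fun y hy => analyticAt_matrix_det fun i j =>
    (((b.coord i).toContinuousLinearMap.comp q).comp
      (ContinuousLinearMap.apply ℝ F (v j))).analyticAt _ |>.comp (hA y hy)
  have hqv : (fun i => q (A x (v i))) = b := funext fun i =>
    (congrArg q (hv i)).trans (hq (b i))
  have hminor_x : minor x ≠ 0 := by
    simp only [minor, hqv, Basis.toMatrix_self, Matrix.det_one, ne_eq, one_ne_zero,
      not_false_eq_true]
  refine (isAnalyticallyThin_setOf_eq_zero hU hminor hxU hminor_x).mono ?_
  rintro y ⟨hyU, hlt⟩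
  refine ⟨hyU, by_contra fun hne => hlt.not_ge ?_⟩
  have hspan : Submodule.span ℝ (range fun i => q (A y (v i))) = ⊤ :=
    (b.is_basis_iff_det.2 (isUnit_iff_ne_zero.2 hne)).2
  have hmap : (A y).range.map q.toLinearMap = ⊤ := top_unique <| hspan ▸
    Submodule.span_le.2 (range_subset_iff.2 fun i => ⟨_, ⟨v i, rfl⟩, rfl⟩)
  calc finrank ℝ (A x).range = finrank ℝ ((A y).range.map q.toLinearMap) := by
        rw [hmap, finrank_top]
    _ ≤ finrank ℝ (A y).range := Submodule.finrank_map_le _ _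

theorem apply_eq_of_fderiv_comp_inr_eq_zero {Φ : R × K → F} {B₁ : Set R} {B₂ : Set K}
    (hB₂ : IsOpen B₂) (hB₂c : IsPreconnected B₂)
    (hΦ : ∀ z ∈ B₁ ×ˢ B₂, DifferentiableAt ℝ Φ z ∧ (fderiv ℝ Φ z).comp (.inr ℝ R K) = 0)
    {u : R} (hu : u ∈ B₁) {v w : K} (hv : v ∈ B₂) (hw : w ∈ B₂) : Φ (u, v) = Φ (u, w) := by
  have hslice : ∀ t ∈ B₂, HasFDerivAt (fun t => Φ (u, t)) (0 : K →L[ℝ] F) t := fun t ht => by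
    obtain ⟨hdiff, hzero⟩ := hΦ (u, t) ⟨hu, ht⟩
    rw [← hzero]
    exact hdiff.hasFDerivAt.comp t (hasFDerivAt_prodMk_right u t)
  exact hB₂.is_const_of_fderiv_eq_zero hB₂c
    (fun t ht => (hslice t ht).differentiableAt.differentiableWithinAt)
    (fun t ht => (hslice t ht).fderiv) hv hw

theorem fderiv_comp_symm_comp_inr_eq_zero [FiniteDimensional ℝ F] {f : E → F} {q : F →L[ℝ] R}
    {P : OpenPartialHomeomorph E (R × K)} (hP : ∀ y, (P y).1 = q (f y)) {z : R × K}
    (hz : z ∈ P.target) (hf : DifferentiableAt ℝ f (P.symm z))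
    (hPsymm : DifferentiableAt ℝ P.symm z)
    (hrank : finrank ℝ (fderiv ℝ f (P.symm z)).range ≤ finrank ℝ R) :
    (fderiv ℝ (f ∘ P.symm) z).comp (.inr ℝ R K) = 0 := by
  have hfst : q ∘ f ∘ P.symm =ᶠ[𝓝 z] Prod.fst := by
    filter_upwards [P.open_target.mem_nhds hz] with w hw
    simp only [Function.comp_apply, ← hP, P.right_inv hw]
  have hcomp : q.comp (fderiv ℝ (f ∘ P.symm) z) = .fst ℝ R K := by
    rw [← q.hasFDerivAt.comp z (hf.comp z hPsymm).hasFDerivAt |>.fderiv, hfst.fderiv_eq, fderiv_fst]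
  have hle : finrank ℝ (fderiv ℝ (f ∘ P.symm) z).range ≤ finrank ℝ R := by
    rw [fderiv_comp z hf hPsymm]
    exact (Submodule.finrank_mono (LinearMap.range_comp_le_range _ _)).trans hrank
  exact ContinuousLinearMap.coe_injective <| comp_inr_eq_zero_of_comp_eq_fst
    (congrArg ContinuousLinearMap.toLinearMap hcomp) hle

theorem exists_nhds_image_subset_of_finrank_range_le [CompleteSpace E] [FiniteDimensional ℝ F]
    {f : E → F} {x : E} (hf : ContDiffAt ℝ 1 f x)
    (hrank : ∀ᶠ y in 𝓝 x, finrank ℝ (fderiv ℝ f y).range ≤ finrank ℝ (fderiv ℝ f x).range) :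
    ∃ V ∈ 𝓝 x, ∃ (γ : (fderiv ℝ f x).range → F) (B : Set (fderiv ℝ f x).range),
      DifferentiableOn ℝ γ B ∧ f '' V ⊆ γ '' B := by
  set L := fderiv ℝ f x
  obtain ⟨q, hq⟩ : L.range.ClosedComplemented := .of_finiteDimensional _
  have hsurj : Function.Surjective (fderiv ℝ (q ∘ f) x) := by
    rw [fderiv_comp x q.differentiableAt (hf.differentiableAt one_ne_zero), q.fderiv]
    rintro ⟨_, v, rfl⟩
    exact ⟨v, hq ⟨L v, v, rfl⟩⟩
  obtain ⟨P, hxP, hP, -, hPsymm⟩ :=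
    exists_submersion_chart one_ne_zero (by simp) (q.contDiff.contDiffAt.comp x hf) hsurj
  have hgood : ∀ᶠ z in 𝓝 (P x), z ∈ P.target ∧ DifferentiableAt ℝ f (P.symm z) ∧
      finrank ℝ (fderiv ℝ f (P.symm z)).range ≤ finrank ℝ L.range :=
    (P.open_target.eventually_mem (P.map_source hxP)).and <| (P.tendsto_symm hxP).eventually <|
      ((hf.eventually (by simp)).mono fun y hy => hy.differentiableAt one_ne_zero).and hrank
  obtain ⟨ε, hε, hbox⟩ := Metric.eventually_nhds_iff_ball.1 hgood
  rw [← Prod.mk.eta (p := P x), ← ball_prod_same] at hbox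
  have hvert : ∀ z ∈ Metric.ball (P x).1 ε ×ˢ Metric.ball (P x).2 ε,
      DifferentiableAt ℝ (f ∘ P.symm) z ∧
        (fderiv ℝ (f ∘ P.symm) z).comp (.inr ℝ L.range _) = 0 := fun z hz => by
    obtain ⟨hzP, hfz, hrk⟩ := hbox z hz
    have hsymm : DifferentiableAt ℝ P.symm z :=
      (hPsymm.contDiffAt (P.open_target.mem_nhds hzP)).differentiableAt one_ne_zero
    exact ⟨hfz.comp z hsymm, fderiv_comp_symm_comp_inr_eq_zero hP hzP hfz hsymm hrk⟩
  refine ⟨P.source ∩ P ⁻¹' (Metric.ball (P x).1 ε ×ˢ Metric.ball (P x).2 ε), ?_,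
    fun u => (f ∘ P.symm) (u, (P x).2), Metric.ball (P x).1 ε, fun u hu => ?_, ?_⟩
  · exact inter_mem (P.open_source.mem_nhds hxP) <| (P.continuousAt hxP).preimage_mem_nhds <|
      prod_mem_nhds (Metric.ball_mem_nhds _ hε) (Metric.ball_mem_nhds _ hε)
  · have hdiff := (hvert (u, (P x).2) ⟨hu, Metric.mem_ball_self hε⟩).1
    exact (hdiff.fun_comp' u (hasFDerivAt_prodMk_left u _).differentiableAt).differentiableWithinAt
  · rintro _ ⟨y, ⟨hyP, hyu, hyv⟩, rfl⟩
    refine ⟨(P y).1, hyu, ?_⟩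
    calc (f ∘ P.symm) ((P y).1, (P x).2) = (f ∘ P.symm) ((P y).1, (P y).2) :=
        apply_eq_of_fderiv_comp_inr_eq_zero Metric.isOpen_ball (convex_ball _ _).isPreconnected
          hvert hyu (Metric.mem_ball_self hε) hyv
      _ = f y := congrArg f (P.left_inv hyP)

end ConstantRank

/-- The critical points of `f` at which `f` is analytic, whose images are the critical values in
the analytic Sard theorem. Analyticity is part of the definition so that `f` can be total but
analytic only on part of its domain, like the maps in `IsAnalyticallyThin`. -/
def analyticCriticalSet {E F : Type*} [NormedAddCommGroup E] [NormedSpace ℝ E]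
    [NormedAddCommGroup F] [NormedSpace ℝ F] (f : E → F) : Set E :=
  {x | AnalyticAt ℝ f x ∧ ¬ Function.Surjective (fderiv ℝ f x)}

section Sard

variable {F : Type*} [NormedAddCommGroup F] [NormedSpace ℝ F] [FiniteDimensional ℝ F]
  [MeasurableSpace F] [BorelSpace F] (ν : Measure F) [ν.IsAddHaarMeasure]

theorem exists_nhds_addHaar_image_null_of_finrank_range_le {E : Type*} [NormedAddCommGroup E]
    [NormedSpace ℝ E] [CompleteSpace E] {f : E → F} {x : E} (hf : ContDiffAt ℝ 1 f x)
    (hrank : ∀ᶠ y in 𝓝 x, finrank ℝ (fderiv ℝ f y).range ≤ finrank ℝ (fderiv ℝ f x).range)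
    (hx : ¬ Function.Surjective (fderiv ℝ f x)) : ∃ V ∈ 𝓝 x, ν (f '' V) = 0 := by
  obtain ⟨V, hV, γ, B, hγ, hfV⟩ := exists_nhds_image_subset_of_finrank_range_le hf hrank
  have hlt : finrank ℝ (fderiv ℝ f x).range < finrank ℝ F :=
    Submodule.finrank_lt fun h => hx (LinearMap.range_eq_top.1 h)
  exact ⟨V, hV, measure_mono_null hfV (addHaar_image_null_of_finrank_lt ν hlt hγ)⟩

theorem image_analyticCriticalSet_inter_image_subset {E E' F : Type*}
    [NormedAddCommGroup E] [NormedSpace ℝ E] [NormedAddCommGroup E'] [NormedSpace ℝ E']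
    [NormedAddCommGroup F] [NormedSpace ℝ F] (f : E → F) (ψ : E' → E) :
    f '' (analyticCriticalSet f ∩ ψ '' {v | AnalyticAt ℝ ψ v}) ⊆
      (f ∘ ψ) '' analyticCriticalSet (f ∘ ψ) := by
  rintro _ ⟨_, ⟨⟨hf, hns⟩, v, hv, rfl⟩, rfl⟩
  refine ⟨v, ⟨hf.comp hv, fun hs => hns ?_⟩, rfl⟩
  rw [fderiv_comp v hf.differentiableAt hv.differentiableAt] at hs
  exact Function.Surjective.of_comp (g := fderiv ℝ ψ v) hs

theorem addHaar_image_analyticCriticalSet {E : Type*} [NormedAddCommGroup E] [NormedSpace ℝ E]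
    [FiniteDimensional ℝ E] (f : E → F) : ν (f '' analyticCriticalSet f) = 0 := by
  induction hd : finrank ℝ E using Nat.strong_induction_on generalizing E with
  | _ d ih =>
  subst hd
  refine measure_image_null_of_locally_null ν fun x hx => ?_
  obtain ⟨ε, hε, hball⟩ := hx.1.exists_ball_analyticOnNhd
  set U := Metric.ball x ε
  obtain ⟨m, hmU, hmax⟩ :=
    exists_forall_finrank_range_le (fun y => (fderiv ℝ f y).toLinearMap)
      ⟨x, Metric.mem_ball_self (x := x) hε⟩
  let D := {y ∈ U | finrank ℝ (fderiv ℝ f y).range < finrank ℝ (fderiv ℝ f m).range}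
  have hD : IsAnalyticallyThin D := isAnalyticallyThin_setOf_finrank_range_lt
    (convex_ball x ε).isPreconnected hball.fderiv hmU
  have hdrop : ν (f '' (analyticCriticalSet f ∩ D)) = 0 := by
    refine (hD.mono inter_subset_right).measure_image_eq_zero f fun K hK ψ => ?_
    exact measure_mono_null ((image_mono (by gcongr; exact inter_subset_left)).trans
      (image_analyticCriticalSet_inter_image_subset f ψ))
      (ih _ (Submodule.finrank_lt hK.ne) (f ∘ ψ) rfl)
  have hmaximal : ν (f '' ((analyticCriticalSet f ∩ U) \ D)) = 0 := by
    refine measure_image_null_of_locally_null ν fun y ⟨⟨hy, hyU⟩, hyD⟩ => ?_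
    have hge := not_lt.1 fun h => hyD ⟨hyU, h⟩
    obtain ⟨V, hV, hnull⟩ := exists_nhds_addHaar_image_null_of_finrank_range_le ν
      hy.1.contDiffAt (Filter.mem_of_superset (Metric.isOpen_ball.mem_nhds hyU)
        fun z hz => (hmax z hz).trans hge) hy.2
    exact ⟨V, mem_nhdsWithin_of_mem_nhds hV, hnull⟩
  refine ⟨analyticCriticalSet f ∩ U,
    inter_mem_nhdsWithin _ (Metric.ball_mem_nhds x hε), ?_⟩
  refine measure_mono_null ?_ (measure_union_null hdrop hmaximal)
  rw [← image_union]
  exact image_mono (by grind)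

end Sard

section Submersion

variable {E F : Type*} [NormedAddCommGroup E] [NormedSpace ℝ E] [FiniteDimensional ℝ E]
  [MeasurableSpace E] [BorelSpace E] (μ : Measure E) [μ.IsAddHaarMeasure]
  [NormedAddCommGroup F] [NormedSpace ℝ F] [FiniteDimensional ℝ F]
  [MeasurableSpace F] [BorelSpace F] (ν : Measure F) [ν.IsAddHaarMeasure]
  {f : E → F}

theorem addHaar_image_null_iff_of_differentiableOn (P : OpenPartialHomeomorph E F)
    (hP : DifferentiableOn ℝ P P.source) (hPsymm : DifferentiableOn ℝ P.symm P.target)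
    (hEF : finrank ℝ E = finrank ℝ F) {s : Set E} (hs : s ⊆ P.source) :
    ν (P '' s) = 0 ↔ μ s = 0 := by
  refine ⟨fun h => ?_, addHaar_image_null_of_finrank_eq ν μ hEF (hP.mono hs)⟩
  rw [← P.symm_image_image_of_subset_source hs]
  exact addHaar_image_null_of_finrank_eq μ ν hEF.symm
    (hPsymm.mono (P.mapsTo.mono_left hs).image_subset) h

theorem exists_nhds_addHaar_inter_preimage_null_iff {x : E} (hf : ContDiffAt ℝ 1 f x)
    (hsurj : Function.Surjective (fderiv ℝ f x)) :
    ∃ V ∈ 𝓝 x, ∀ S : Set F, μ (V ∩ f ⁻¹' S) = 0 ↔ ν (f '' V ∩ S) = 0 := by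
  obtain ⟨P, hxP, hPf, hP, hPsymm⟩ := exists_submersion_chart one_ne_zero (by simp) hf hsurj
  let κ : Measure (fderiv ℝ f x).ker := Measure.addHaar
  have hfinrank : finrank ℝ E = finrank ℝ (F × (fderiv ℝ f x).ker) := by
    have := (fderiv ℝ f x).toLinearMap.finrank_range_add_finrank_ker
    rwa [LinearMap.range_eq_top.2 hsurj, finrank_top, ← finrank_prod, eq_comm] at this
  obtain ⟨B, hB, C, hC, hBC⟩ :=
    mem_nhds_prod_iff.1 (P.open_target.mem_nhds (P.map_source hxP))
  let V := P.symm '' (B ×ˢ C)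
  have hVP : V ⊆ P.source := (P.symm.mapsTo.mono_left hBC).image_subset
  have hPV : P '' V = B ×ˢ C := P.image_symm_image_of_subset_target hBC
  have hfV : f '' V = B := by
    simp_rw [← hPf]
    rw [← image_image Prod.fst P, hPV, fst_image_prod _ ⟨_, mem_of_mem_nhds hC⟩]
  have hPS (S : Set F) : P '' (V ∩ f ⁻¹' S) = (B ∩ S) ×ˢ C := by
    have hfS : f ⁻¹' S = P ⁻¹' (S ×ˢ univ) := by
      ext y
      simp [hPf]
    rw [hfS, image_inter_preimage, hPV, prod_inter_prod, inter_univ]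
  have hVx : V ∈ 𝓝 x := P.left_inv hxP ▸
    P.symm.image_mem_nhds (P.map_source hxP) (prod_mem_nhds hB hC)
  refine ⟨V, hVx, fun S => ?_⟩
  rw [← addHaar_image_null_iff_of_differentiableOn μ (ν.prod κ) P (hP.differentiableOn one_ne_zero)
    (hPsymm.differentiableOn one_ne_zero) hfinrank (inter_subset_left.trans hVP), hPS, hfV,
    Measure.prod_prod, mul_eq_zero, or_iff_left (Measure.measure_pos_of_mem_nhds κ hC).ne']

theorem addHaar_inter_preimage_null_of_submersion {R : Set E} (hf : ∀ x ∈ R, ContDiffAt ℝ 1 f x)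
    (hsurj : ∀ x ∈ R, Function.Surjective (fderiv ℝ f x)) {S : Set F} (hS : ν S = 0) :
    μ (R ∩ f ⁻¹' S) = 0 := by
  refine measure_null_of_locally_null _ fun x ⟨hxR, _⟩ => ?_
  obtain ⟨V, hV, hnull⟩ :=
    exists_nhds_addHaar_inter_preimage_null_iff μ ν (hf x hxR) (hsurj x hxR)
  have hVS : μ (V ∩ f ⁻¹' S) = 0 := (hnull S).2 (measure_mono_null inter_subset_right hS)
  exact ⟨_, inter_mem_nhdsWithin _ hV, measure_mono_null (by grind) hVS⟩

theorem addHaar_image_inter_null_of_submersion {R : Set E} (hf : ∀ x ∈ R, ContDiffAt ℝ 1 f x)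
    (hsurj : ∀ x ∈ R, Function.Surjective (fderiv ℝ f x)) {S : Set F} (hS : μ (f ⁻¹' S) = 0) :
    ν (f '' R ∩ S) = 0 := by
  rw [← image_inter_preimage]
  refine measure_image_null_of_locally_null ν fun x ⟨hxR, _⟩ => ?_
  obtain ⟨V, hV, hnull⟩ :=
    exists_nhds_addHaar_inter_preimage_null_iff μ ν (hf x hxR) (hsurj x hxR)
  have hVS : ν (f '' V ∩ S) = 0 := (hnull S).1 (measure_mono_null inter_subset_right hS)
  refine ⟨_, inter_mem_nhdsWithin _ hV, measure_mono_null ?_ hVS⟩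
  rw [← image_inter_preimage]
  exact image_mono (by grind)

end Submersion

section Surjective

variable {E F : Type*} [NormedAddCommGroup E] [NormedSpace ℝ E] [FiniteDimensional ℝ E]
  [NormedAddCommGroup F] [NormedSpace ℝ F] [FiniteDimensional ℝ F] {f : E → F}

theorem exists_surjective_fderiv_of_surjective (hf : ∀ x, AnalyticAt ℝ f x)
    (hsurj : Function.Surjective f) : ∃ x, Function.Surjective (fderiv ℝ f x) := by
  borelize F
  by_contra! hcrit
  have huniv : analyticCriticalSet f = univ := eq_univ_of_forall fun x => ⟨hf x, hcrit x⟩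
  have hnull := addHaar_image_analyticCriticalSet (Measure.addHaar : Measure F) f
  rw [huniv, image_univ, hsurj.range_eq] at hnull
  exact isOpen_univ.measure_ne_zero _ univ_nonempty hnull

theorem isAnalyticallyThin_setOf_not_surjective_fderiv (hf : ∀ x, AnalyticAt ℝ f x) {x₀ : E}
    (hx₀ : Function.Surjective (fderiv ℝ f x₀)) :
    IsAnalyticallyThin {x | ¬ Function.Surjective (fderiv ℝ f x)} := by
  refine (isAnalyticallyThin_setOf_finrank_range_lt isPreconnected_univ
    (fun x _ => (hf x).fderiv) (mem_univ x₀)).mono ?_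
  intro x hx
  refine ⟨mem_univ x, ?_⟩
  rw [LinearMap.range_eq_top.2 hx₀, finrank_top]
  exact Submodule.finrank_lt fun h => hx (LinearMap.range_eq_top.1 h)

theorem analytic_surjective_null_iff_preimage_null_general
    [MeasurableSpace E] [BorelSpace E] (μ : Measure E) [μ.IsAddHaarMeasure]
    [MeasurableSpace F] [BorelSpace F] (ν : Measure F) [ν.IsAddHaarMeasure]
    (hf : ∀ x, AnalyticAt ℝ f x) (hsurj : Function.Surjective f) (S : Set F) :
    ν S = 0 ↔ μ (f ⁻¹' S) = 0 := by
  let R := {x | Function.Surjective (fderiv ℝ f x)}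
  have hR : ∀ x ∈ R, ContDiffAt ℝ 1 f x := fun x _ => (hf x).contDiffAt
  constructor <;> intro hS
  · obtain ⟨x₀, hx₀⟩ := exists_surjective_fderiv_of_surjective hf hsurj
    have hcrit : μ Rᶜ = 0 :=
      (isAnalyticallyThin_setOf_not_surjective_fderiv hf hx₀).addHaar_eq_zero μ
    have hreg : μ (R ∩ f ⁻¹' S) = 0 :=
      addHaar_inter_preimage_null_of_submersion μ ν hR (fun _ => id) hS
    exact measure_mono_null (by grind) (measure_union_null hreg hcrit)
  · have hreg : ν (f '' R ∩ S) = 0 :=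
      addHaar_image_inter_null_of_submersion μ ν hR (fun _ => id) hS
    have hcrit : ν (f '' analyticCriticalSet f) = 0 := addHaar_image_analyticCriticalSet ν f
    refine measure_mono_null (fun y hy => ?_) (measure_union_null hreg hcrit)
    obtain ⟨x, rfl⟩ := hsurj y
    exact (em (x ∈ R)).imp (fun hx => ⟨⟨x, hx, rfl⟩, hy⟩) fun hx => ⟨x, ⟨hf x, hx⟩, rfl⟩

end Surjective

/-- If `G : ℝ^k → ℝ^n` is a real-analytic surjective map, then a Borel set `B ⊆ ℝ^n` is
Lebesgue-null if and only if its preimage `G⁻¹(B)` is Lebesgue-null in `ℝ^k`. -/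
theorem analytic_surjective_null_iff_preimage_null (k n : ℕ)
    (G : (Fin k → ℝ) → (Fin n → ℝ))
    (hG : ∀ x, AnalyticAt ℝ G x) (hsurj : Function.Surjective G)
    (B : Set (Fin n → ℝ)) (hB : MeasurableSet B) :
    volume B = 0 ↔ volume (G ⁻¹' B) = 0 :=
  analytic_surjective_null_iff_preimage_null_general volume volume hG hsurj B
end

section
/- Let M > 0, 0 < α < 1, γ = 1/α, and β > 0, and let v be a real random variable whose distribution has a density with respect to Lebesgue measure. Then the identity γ · E[exp(−(β/(2M))(γp − (1−γ)Mv)²)] = exp(−(β/(2M))p²) holds for every p ∈ ℝ if and only if v is Gaussian with mean 0 and variance σ² = (1+α)/(M(1−α)β) (equivalently, β = (1+α)/(M(1−α)σ²)). -/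
open MeasureTheory ProbabilityTheory

/-!
Write `γp − (1−γ)Mv = γ(p − cv)` with `c = −(1−α)M`. The change of scale absorbs the prefactor `γ`
into the normalisation of a Gaussian density, so the functional equation says that `cv` plus an
independent `N(0, α²M/β)` variable has the continuous density of `N(0, M/β)`. The law of such a
Gaussian perturbation determines the law of `cv`, because the characteristic function of a Gaussian
never vanishes. Hence `cv ∼ N(0, (1−α²)M/β)`, and dividing by `c² = (1−α)²M²` gives the variance
of `v`.
-/

open scoped NNReal ENNReal

section Convolution

theorem conv_right_cancel_iff_of_charFun_ne_zero {E : Type*} [NormedAddCommGroup E]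
    [InnerProductSpace ℝ E] [CompleteSpace E] [SecondCountableTopology E] [MeasurableSpace E]
    [BorelSpace E] {μ₁ μ₂ κ : Measure E} [IsFiniteMeasure μ₁] [IsFiniteMeasure μ₂]
    [IsFiniteMeasure κ] (hκ : ∀ t, charFun κ t ≠ 0) :
    μ₁ ∗ κ = μ₂ ∗ κ ↔ μ₁ = μ₂ := by
  refine ⟨fun h ↦ Measure.ext_of_charFun (funext fun t ↦ mul_right_cancel₀ (hκ t) ?_), ?_⟩
  · rw [← charFun_conv, h, charFun_conv]
  · rintro rfl
    rfl

variable {G : Type*} [AddGroup G] [MeasurableSpace G]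

theorem conv_withDensity [MeasurableAdd₂ G] [MeasurableNeg G] (μ ρ : Measure G) [SFinite μ]
    [SFinite ρ] [ρ.IsAddLeftInvariant] {f : G → ℝ≥0∞} (hf : Measurable f) :
    μ ∗ ρ.withDensity f = ρ.withDensity (fun x ↦ ∫⁻ w, f (-w + x) ∂μ) := by
  refine Measure.ext_of_lintegral _ fun φ hφ ↦ ?_
  have translate (w : G) :
      ∫⁻ y, φ (w + y) ∂ρ.withDensity f = ∫⁻ x, f (-w + x) * φ x ∂ρ := by
    rw [lintegral_withDensity_eq_lintegral_mul _ hf (by fun_prop),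
      ← lintegral_add_left_eq_self (fun x ↦ f (-w + x) * φ x) w]
    simp only [Pi.mul_apply, neg_add_cancel_left]
  calc ∫⁻ z, φ z ∂(μ ∗ ρ.withDensity f)
      = ∫⁻ w, ∫⁻ x, f (-w + x) * φ x ∂ρ ∂μ := by
        simp only [Measure.lintegral_conv hφ, translate]
    _ = ∫⁻ x, ∫⁻ w, f (-w + x) * φ x ∂μ ∂ρ := lintegral_lintegral_swap (by fun_prop)
    _ = ∫⁻ x, (∫⁻ w, f (-w + x) ∂μ) * φ x ∂ρ :=
        lintegral_congr fun x ↦ lintegral_mul_const _ (by fun_prop)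
    _ = ∫⁻ x, φ x ∂ρ.withDensity (fun x ↦ ∫⁻ w, f (-w + x) ∂μ) :=
        (lintegral_withDensity_eq_lintegral_mul _ (by fun_prop) hφ).symm

theorem continuous_integral_neg_add {E : Type*} [TopologicalSpace G] [IsTopologicalAddGroup G]
    [FirstCountableTopology G] [OpensMeasurableSpace G] [NormedAddCommGroup E]
    [NormedSpace ℝ E] [SecondCountableTopologyEither G E] (μ : Measure G) [IsFiniteMeasure μ]
    {f : G → E} (hf : Continuous f) {C : ℝ} (hC : ∀ x, ‖f x‖ ≤ C) :
    Continuous fun x ↦ ∫ w, f (-w + x) ∂μ :=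
  continuous_of_dominated (bound := fun _ ↦ C)
    (fun _ ↦ Continuous.aestronglyMeasurable (by fun_prop)) (fun _ ↦ ae_of_all _ fun _ ↦ hC _)
    (integrable_const C) (ae_of_all _ fun _ ↦ by fun_prop)

theorem withDensity_ofReal_eq_iff_of_continuous {X : Type*} [TopologicalSpace X]
    [MeasurableSpace X] [OpensMeasurableSpace X] (ρ : Measure X) [SigmaFinite ρ]
    [ρ.IsOpenPosMeasure] {f g : X → ℝ} (hf : Continuous f) (hg : Continuous g)
    (hf₀ : ∀ x, 0 ≤ f x) (hg₀ : ∀ x, 0 ≤ g x) :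
    ρ.withDensity (fun x ↦ .ofReal (f x)) = ρ.withDensity (fun x ↦ .ofReal (g x)) ↔
      ∀ x, f x = g x := by
  have hf' : Continuous fun x ↦ ENNReal.ofReal (f x) := ENNReal.continuous_ofReal.comp hf
  have hg' : Continuous fun x ↦ ENNReal.ofReal (g x) := ENNReal.continuous_ofReal.comp hg
  rw [withDensity_eq_iff_of_sigmaFinite hf'.measurable.aemeasurable hg'.measurable.aemeasurable,
    hf'.ae_eq_iff_eq ρ hg', funext_iff]
  exact forall_congr' fun x ↦ ENNReal.ofReal_eq_ofReal_iff (hf₀ x) (hg₀ x)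

theorem conv_withDensity_ofReal_eq_withDensity_ofReal_iff [TopologicalSpace G]
    [IsTopologicalAddGroup G] [SecondCountableTopology G] [BorelSpace G] (μ ρ : Measure G)
    [IsFiniteMeasure μ] [SigmaFinite ρ] [ρ.IsAddLeftInvariant] [ρ.IsOpenPosMeasure] {f g : G → ℝ}
    (hf : Continuous f) (hg : Continuous g) (hf₀ : ∀ x, 0 ≤ f x) (hg₀ : ∀ x, 0 ≤ g x)
    {C : ℝ} (hC : ∀ x, f x ≤ C) :
    μ ∗ ρ.withDensity (fun x ↦ .ofReal (f x)) = ρ.withDensity (fun x ↦ .ofReal (g x)) ↔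
      ∀ x, ∫ w, f (-w + x) ∂μ = g x := by
  have norm_le (x : G) : ‖f x‖ ≤ C := (Real.norm_of_nonneg (hf₀ x)).trans_le (hC x)
  have density_eq (x : G) :
      ∫⁻ w, .ofReal (f (-w + x)) ∂μ = ENNReal.ofReal (∫ w, f (-w + x) ∂μ) :=
    (ofReal_integral_eq_lintegral_ofReal
      (.of_bound (Continuous.aestronglyMeasurable (by fun_prop)) C (ae_of_all _ fun _ ↦ norm_le _))
      (ae_of_all _ fun _ ↦ hf₀ _)).symm
  rw [conv_withDensity μ ρ hf.measurable.ennreal_ofReal]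
  simp only [density_eq]
  exact withDensity_ofReal_eq_iff_of_continuous ρ (continuous_integral_neg_add μ hf norm_le) hg
    (fun _ ↦ integral_nonneg fun _ ↦ hf₀ _) hg₀

end Convolution

section Gaussian

@[fun_prop]
theorem continuous_gaussianPDFReal (m : ℝ) (s : ℝ≥0) : Continuous (gaussianPDFReal m s) := by
  unfold gaussianPDFReal
  fun_prop

theorem gaussianPDFReal_le (m : ℝ) (s : ℝ≥0) (x : ℝ) :
    gaussianPDFReal m s x ≤ (√(2 * Real.pi * s))⁻¹ := by
  refine mul_le_of_le_one_right (by positivity) (Real.exp_le_one_iff.mpr ?_)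
  exact div_nonpos_of_nonpos_of_nonneg (neg_nonpos.mpr (sq_nonneg _)) (by positivity)

theorem exp_neg_mul_sq_eq_mul_gaussianPDFReal {s : ℝ≥0} (hs : s ≠ 0) (x : ℝ) :
    Real.exp (-(2 * s : ℝ)⁻¹ * x ^ 2) = √(2 * Real.pi * s) * gaussianPDFReal 0 s x := by
  have hZ : √(2 * Real.pi * s) ≠ 0 := by positivity
  rw [gaussianPDFReal, mul_inv_cancel_left₀ hZ, sub_zero]
  ring_nf

theorem conv_gaussianReal_eq_gaussianReal_iff (μ : Measure ℝ) [IsFiniteMeasure μ] (m n : ℝ)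
    (r s : ℝ≥0) :
    μ ∗ gaussianReal m s = gaussianReal (n + m) (r + s) ↔ μ = gaussianReal n r := by
  rw [← gaussianReal_conv_gaussianReal]
  refine conv_right_cancel_iff_of_charFun_ne_zero fun t ↦ ?_
  rw [charFun_gaussianReal]
  exact Complex.exp_ne_zero _

theorem integral_gaussianPDFReal_sub_eq_iff (μ : Measure ℝ) [IsFiniteMeasure μ] (m n : ℝ)
    (r : ℝ≥0) {s : ℝ≥0} (hs : s ≠ 0) :
    (∀ x, ∫ w, gaussianPDFReal m s (x - w) ∂μ = gaussianPDFReal (n + m) (r + s) x) ↔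
      μ = gaussianReal n r := by
  have hrs : r + s ≠ 0 := by positivity
  rw [← conv_gaussianReal_eq_gaussianReal_iff μ m n r s, gaussianReal_of_var_ne_zero m hs,
    gaussianReal_of_var_ne_zero (n + m) hrs]
  simp only [sub_eq_neg_add]
  exact (conv_withDensity_ofReal_eq_withDensity_ofReal_iff μ volume
    (continuous_gaussianPDFReal m s) (continuous_gaussianPDFReal _ _)
    (gaussianPDFReal_nonneg m s) (gaussianPDFReal_nonneg _ _) (gaussianPDFReal_le m s)).symm

theorem map_const_mul_eq_gaussianReal_iff (ν : Measure ℝ) (n : ℝ) (r : ℝ≥0) {c : ℝ} (hc : c ≠ 0) :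
    ν.map (c * ·) = gaussianReal (c * n) (.mk (c ^ 2) (sq_nonneg _) * r) ↔
      ν = gaussianReal n r := by
  rw [← gaussianReal_map_const_mul]
  exact (MeasurableEquiv.mulLeft₀ c hc).map_measurableEquiv_injective.eq_iff

theorem integral_gaussianPDFReal_sub_mul_eq_iff (ν : Measure ℝ) [IsFiniteMeasure ν] (m n : ℝ)
    (r : ℝ≥0) {s : ℝ≥0} (hs : s ≠ 0) {c : ℝ} (hc : c ≠ 0) :
    (∀ x, ∫ v, gaussianPDFReal m s (x - c * v) ∂ν =
        gaussianPDFReal (c * n + m) (.mk (c ^ 2) (sq_nonneg _) * r + s) x) ↔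
      ν = gaussianReal n r := by
  rw [← map_const_mul_eq_gaussianReal_iff ν n r hc,
    ← integral_gaussianPDFReal_sub_eq_iff _ m _ _ hs]
  refine forall_congr' fun x ↦ ?_
  rw [integral_map (by fun_prop) (Continuous.aestronglyMeasurable (by fun_prop))]

theorem inv_mul_integral_exp_inv_mul_eq_iff {Ω : Type*} [MeasurableSpace Ω] (μ : Measure Ω)
    (X : Ω → ℝ) (p : ℝ) {α : ℝ} (hα : 0 < α) {s : ℝ≥0} (hs : s ≠ 0) :
    α⁻¹ * ∫ ω, Real.exp (-(2 * s : ℝ)⁻¹ * (α⁻¹ * X ω) ^ 2) ∂μ = Real.exp (-(2 * s : ℝ)⁻¹ * p ^ 2) ↔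
      ∫ ω, gaussianPDFReal 0 (.mk (α ^ 2) (sq_nonneg _) * s) (X ω) ∂μ = gaussianPDFReal 0 s p := by
  have hZ : √(2 * Real.pi * s) ≠ 0 := by positivity
  simp only [exp_neg_mul_sq_eq_mul_gaussianPDFReal hs, gaussianPDFReal_inv_mul hα.ne',
    abs_of_pos hα, mul_zero, integral_const_mul]
  rw [mul_left_comm, inv_mul_cancel_left₀ hα.ne', mul_right_inj' hZ]

end Gaussian

theorem collision_momentum_eq (M v p : ℝ) {α : ℝ} (hα : α ≠ 0) :
    α⁻¹ * p - (1 - α⁻¹) * M * v = α⁻¹ * (p - -((1 - α) * M) * v) := by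
  field_simp
  ring

theorem collision_variance_eq {M α β : ℝ} (hM : M ≠ 0) :
    (-((1 - α) * M)) ^ 2 * ((1 + α) / (M * (1 - α) * β)) + α ^ 2 * (M / β) = M / β := by
  field_simp
  ring

theorem gibbs_functional_equation_iff_gaussian_general (M α β : ℝ)
    (hM : 0 < M) (hα0 : 0 < α) (hα1 : α < 1) (hβ : 0 < β)
    (ν : Measure ℝ) [IsFiniteMeasure ν] :
    (∀ p : ℝ,
        (1 / α) * ∫ v, Real.exp (-(β / (2 * M)) * ((1 / α) * p - (1 - 1 / α) * M * v) ^ 2) ∂ν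
          = Real.exp (-(β / (2 * M)) * p ^ 2))
      ↔ ν = gaussianReal 0 (((1 + α) / (M * (1 - α) * β)).toNNReal) := by
  have : 0 < 1 - α := sub_pos.mpr hα1
  set c : ℝ := -((1 - α) * M) with hc
  set r : ℝ≥0 := ((1 + α) / (M * (1 - α) * β)).toNNReal with hr
  obtain ⟨s, hs⟩ : ∃ s : ℝ≥0, (s : ℝ) = M / β := ⟨⟨M / β, by positivity⟩, rfl⟩
  have hs₀ : s ≠ 0 := NNReal.coe_ne_zero.mp (hs ▸ by positivity)
  have hα₀ : NNReal.mk (α ^ 2) (sq_nonneg _) * s ≠ 0 :=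
    mul_ne_zero (NNReal.coe_ne_zero.mp (pow_pos hα0 2).ne') hs₀
  have variance_balance :
      NNReal.mk (c ^ 2) (sq_nonneg _) * r + .mk (α ^ 2) (sq_nonneg _) * s = s := by
    apply NNReal.coe_injective
    simp only [NNReal.coe_add, NNReal.coe_mul, NNReal.coe_mk, hs, hr, hc]
    rw [Real.coe_toNNReal _ (by positivity), collision_variance_eq hM.ne']
  have rate_eq : β / (2 * M) = (2 * s : ℝ)⁻¹ := by
    rw [hs]
    field_simp
  rw [← integral_gaussianPDFReal_sub_mul_eq_iff ν 0 0 r hα₀ (c := c)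
    (neg_ne_zero.mpr (by positivity)), variance_balance, mul_zero, add_zero]
  refine forall_congr' fun p ↦ ?_
  simp only [one_div, collision_momentum_eq M _ p hα0.ne', rate_eq]
  exact inv_mul_integral_exp_inv_mul_eq_iff ν (fun v ↦ p - c * v) p hα0 hs₀

/-- With `γ = 1/α`, the identity
`γ·E[exp(−(β/2M)(γp − (1−γ)Mv)²)] = exp(−(β/2M)p²)` holds for every `p`
iff `v` is Gaussian with mean `0` and variance `σ² = (1+α)/(M(1−α)β)`. -/
theorem gibbs_functional_equation_iff_gaussian (M α β : ℝ)
    (hM : 0 < M) (hα0 : 0 < α) (hα1 : α < 1) (hβ : 0 < β)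
    (ν : Measure ℝ) [IsProbabilityMeasure ν] (hν : ν ≪ volume) :
    (∀ p : ℝ,
        (1 / α) * ∫ v, Real.exp (-(β / (2 * M)) * ((1 / α) * p - (1 - 1 / α) * M * v) ^ 2) ∂ν
          = Real.exp (-(β / (2 * M)) * p ^ 2))
      ↔ ν = gaussianReal 0 (((1 + α) / (M * (1 - α) * β)).toNNReal) :=
  gibbs_functional_equation_iff_gaussian_general M α β hM hα0 hα1 hβ ν
end
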